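/- Let ξ ∈ Ξ and set r := sup{t ∈ ℝ : t·(v·λ̃)(A) ≤ ξ(A) for all Borel sets A ⊆ E} ∈ [0,1]. Then the relative LOF-efficiency of ξ equals r, i.e., inf_{h ∈ F_{v,c}} B(h, ξ) / inf_{h ∈ F_{v,c}} B(h, v·λ̃) = r. (Corollary 2.3) -/

import Mathlib

/-!
For an alternative `h`, orthogonality of `h` to the `f i` in `L²(v·λ̃)` gives, by Pythagoras,
`∫ (h - fᵀθ)² d(v·λ̃) ≥ ∫ h² d(v·λ̃) ≥ c` for every `θ` (`FClass_le_vmeas`). Hence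
`B(h, v·λ̃) ≥ c / σ²`, and whenever `t·(v·λ̃) ≤ ξ` also `B(h, ξ) ≥ t * c / σ²`; taking the supremum
over `t` gives `B(h, ξ) ≥ r * c / σ²`.

These bounds are sharp. For `t > r` the inequality `t·(v·λ̃) ≤ ξ` fails. The densities have bounded
variation, hence are continuous almost everywhere, so there is an open interval without atoms of
`ξ` on which the density of `ξ` lies below that of `t·(v·λ̃)` (`exists_interval`). The polynomials
cut off to that interval form an infinite-dimensional space, so a nonzero one satisfies the `k`
orthogonality constraints; rescaled to `∫ h² d(v·λ̃) = c`, it is an alternative with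
`∫ h² dξ ≤ t * c` (`exists_alternative`). Choosing `θ = 0` bounds both infima from above, which
are therefore `c / σ²` and `r * c / σ²`.
-/

set_option autoImplicit false

open MeasureTheory Set ENNReal

/-- The uniform (normalized Lebesgue) distribution on `[a, b]`. -/
noncomputable def unif (a b : ℝ) : Measure ℝ :=
  (ENNReal.ofReal (b - a))⁻¹ • volume.restrict (Icc a b)

/-- Membership in the class `Ξ` of designs: probability measures on `[a,b]` that are a finite
sum of point masses (located in `[a,b]`) plus a part that is absolutely continuous with respect
to Lebesgue measure on `[a,b]` with a density of bounded variation. -/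
def MemXi (a b : ℝ) (ξ : Measure ℝ) : Prop :=
  IsProbabilityMeasure ξ ∧
  ∃ (s : Finset ℝ) (w : ℝ → ℝ≥0∞) (d : ℝ → ℝ),
    (↑s : Set ℝ) ⊆ Icc a b ∧
    BoundedVariationOn d (Icc a b) ∧ (∀ x, 0 ≤ d x) ∧
    ξ = (∑ t ∈ s, w t • Measure.dirac t)
        + (volume.restrict (Icc a b)).withDensity (fun x => ENNReal.ofReal (d x))

/-- `B(h, ξ) = (1/σ²) inf_θ ∫ (h - fᵀθ)² dξ`, the (scaled) squared `L²(ξ)`-distance of `h`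
from the span of the regression functions. -/
noncomputable def Bfun (k : ℕ) (f : ℝ → Fin k → ℝ) (σ2 : ℝ) (h : ℝ → ℝ)
    (ξ : Measure ℝ) : ℝ :=
  (1 / σ2) * ⨅ θ : Fin k → ℝ, ∫ x, (h x - ∑ i, f x i * θ i) ^ 2 ∂ξ

/-- The class of alternatives `F_{v,c}`. -/
def FClass (a b : ℝ) (k : ℕ) (f : ℝ → Fin k → ℝ) (v : ℝ → ℝ) (c : ℝ) : Set (ℝ → ℝ) :=
  {h | BoundedVariationOn h (Icc a b) ∧ c ≤ ∫ x, (h x) ^ 2 * v x ∂(unif a b) ∧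
       ∀ i : Fin k, ∫ x, f x i * (h x * v x) ∂(unif a b) = 0}

/-! ### Integrability of functions of bounded variation -/

/-- A function of bounded variation on `[a, b]` is essentially bounded with respect to every
finite measure carried by `[a, b]`. -/
lemma bv_memLp {a b : ℝ} {g : ℝ → ℝ} (hg : BoundedVariationOn g (Icc a b))
    {ν : Measure ℝ} [IsFiniteMeasure ν] (hν : ∀ᵐ x ∂ν, x ∈ Icc a b) : MemLp g ∞ ν := by
  obtain ⟨p, q, hp, hq, rfl⟩ := hg.locallyBoundedVariationOn.exists_monotoneOn_sub_monotoneOn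
  have hm : AEStronglyMeasurable (p - q) ν := by
    rw [← Measure.restrict_eq_self_of_ae_mem hν]
    exact ((aemeasurable_restrict_of_monotoneOn measurableSet_Icc hp).sub
      (aemeasurable_restrict_of_monotoneOn measurableSet_Icc hq)).aestronglyMeasurable
  refine MemLp.of_bound hm (‖(p - q) a‖ + (eVariationOn (p - q) (Icc a b)).toReal) ?_
  filter_upwards [hν] with x hx
  have h1 := hg.dist_le hx (left_mem_Icc.2 (hx.1.trans hx.2))
  rw [dist_eq_norm] at h1
  have h2 := norm_le_norm_add_norm_sub' ((p - q) x) ((p - q) a)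
  linarith

lemma memLp_top_mul {ν : Measure ℝ} {g h : ℝ → ℝ} (hg : MemLp g ∞ ν) (hh : MemLp h ∞ ν) :
    MemLp (fun x => g x * h x) ∞ ν := hh.mul' hg

/-! ### The measures `λ̃` and `v·λ̃` -/

lemma unif_eq {a b : ℝ} (hab : a < b) :
    unif a b = ENNReal.ofReal (b - a)⁻¹ • volume.restrict (Icc a b) := by
  rw [unif, ENNReal.ofReal_inv_of_pos (by linarith)]

lemma unif_finite {a b : ℝ} (hab : a < b) : IsFiniteMeasure (unif a b) := by
  rw [unif_eq hab]
  exact Measure.smul_finite _ ENNReal.ofReal_ne_top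

lemma unif_mem {a b : ℝ} : ∀ᵐ x ∂(unif a b), x ∈ Icc a b :=
  Measure.ae_smul_measure (ae_restrict_mem measurableSet_Icc) _

lemma unif_integral {a b : ℝ} (hab : a < b) (g : ℝ → ℝ) :
    ∫ x, g x ∂(unif a b) = (b - a)⁻¹ * ∫ x in Icc a b, g x := by
  rw [unif_eq hab, integral_smul_measure, ENNReal.toReal_ofReal (by
    have : 0 < b - a := by linarith
    positivity), smul_eq_mul]

/-- The design `v·λ̃`. -/
noncomputable def vmeas (a b : ℝ) (v : ℝ → ℝ) : Measure ℝ :=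
  (unif a b).withDensity fun x => ENNReal.ofReal (v x)

lemma vmeas_mem {a b : ℝ} (v : ℝ → ℝ) : ∀ᵐ x ∂(vmeas a b v), x ∈ Icc a b :=
  (withDensity_absolutelyContinuous _ _).ae_le unif_mem

lemma smul_vmeas {a b : ℝ} (hab : a < b) (v : ℝ → ℝ) {t : ℝ} (ht : 0 ≤ t) :
    ENNReal.ofReal t • vmeas a b v = (volume.restrict (Icc a b)).withDensity
      (fun x => ENNReal.ofReal (t * (b - a)⁻¹ * v x)) := by
  have hL : 0 ≤ (b - a)⁻¹ := inv_nonneg.2 (by linarith)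
  rw [vmeas, unif_eq hab, withDensity_smul_measure, smul_smul, ← ENNReal.ofReal_mul ht,
    ← withDensity_smul' _ _ ENNReal.ofReal_ne_top]
  congr 1
  funext x
  simp [ENNReal.ofReal_mul (mul_nonneg ht hL)]

lemma vmeas_integral {a b : ℝ} (hab : a < b) {v : ℝ → ℝ} (hv0 : ∀ x, 0 ≤ v x)
    (hvBV : BoundedVariationOn v (Icc a b)) (g : ℝ → ℝ) :
    ∫ x, g x ∂(vmeas a b v) = ∫ x, v x * g x ∂(unif a b) := by
  have := unif_finite hab
  rw [vmeas, integral_withDensity_eq_integral_toReal_smul₀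
    (bv_memLp hvBV unif_mem).aestronglyMeasurable.aemeasurable.ennreal_ofReal (by simp)]
  simp [ENNReal.toReal_ofReal (hv0 _)]

lemma vmeas_univ {a b : ℝ} (hab : a < b) {v : ℝ → ℝ} (hv0 : ∀ x, 0 ≤ v x)
    (hvBV : BoundedVariationOn v (Icc a b)) (hv1 : ∫ x, v x ∂(unif a b) = 1) :
    vmeas a b v univ = 1 := by
  have := unif_finite hab
  rw [vmeas, withDensity_apply _ MeasurableSet.univ, Measure.restrict_univ,
    ← ofReal_integral_eq_lintegral_ofReal ((bv_memLp hvBV unif_mem).integrable le_top)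
      (Filter.Eventually.of_forall hv0), hv1, ENNReal.ofReal_one]

/-! ### Bounds on the squared distance to the regression functions -/

lemma bddBelow_theta {k : ℕ} (f : ℝ → Fin k → ℝ) (h : ℝ → ℝ) (ν : Measure ℝ) :
    BddBelow (range fun θ : Fin k → ℝ => ∫ x, (h x - ∑ i, f x i * θ i) ^ 2 ∂ν) :=
  ⟨0, by rintro _ ⟨θ, rfl⟩; exact integral_nonneg fun x => sq_nonneg _⟩

lemma Bfun_le {k : ℕ} (f : ℝ → Fin k → ℝ) {σ2 : ℝ} (hσ : 0 < σ2) (h : ℝ → ℝ) (ν : Measure ℝ) :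
    Bfun k f σ2 h ν ≤ (1 / σ2) * ∫ x, h x ^ 2 ∂ν := by
  unfold Bfun
  gcongr
  simpa using ciInf_le (bddBelow_theta f h ν) 0

lemma residual_memLp {a b : ℝ} {k : ℕ} {f : ℝ → Fin k → ℝ}
    (hfBV : ∀ i, BoundedVariationOn (fun x => f x i) (Icc a b)) {ν : Measure ℝ}
    [IsFiniteMeasure ν] (hν : ∀ᵐ x ∂ν, x ∈ Icc a b) (θ : Fin k → ℝ) :
    MemLp (fun x => ∑ i, f x i * θ i) ∞ ν :=
  memLp_finsetSum _ fun i _ => by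
    simpa [mul_comm] using (bv_memLp (hfBV i) hν).const_mul (θ i)

/-- Pythagoras in `L²(v·λ̃)`: an alternative is orthogonal to the regression functions, so
subtracting a regression function cannot decrease its norm below `√c`. -/
lemma FClass_le_vmeas {a b : ℝ} (hab : a < b) {k : ℕ} {f : ℝ → Fin k → ℝ}
    (hfBV : ∀ i, BoundedVariationOn (fun x => f x i) (Icc a b))
    {v : ℝ → ℝ} (hv0 : ∀ x, 0 ≤ v x) (hvBV : BoundedVariationOn v (Icc a b))
    [IsFiniteMeasure (vmeas a b v)] {c : ℝ} {h : ℝ → ℝ} (hh : h ∈ FClass a b k f v c)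
    (θ : Fin k → ℝ) :
    c ≤ ∫ x, (h x - ∑ i, f x i * θ i) ^ 2 ∂(vmeas a b v) := by
  obtain ⟨hBV, hcge, horth⟩ := hh
  have hm : ∀ᵐ x ∂(vmeas a b v), x ∈ Icc a b := vmeas_mem v
  have Lh := bv_memLp hBV hm
  have Lf := residual_memLp hfBV hm θ
  have I1 : Integrable (fun x => h x ^ 2) (vmeas a b v) := by
    simpa [pow_two] using (memLp_top_mul Lh Lh).integrable le_top
  have I2 : Integrable (fun x => (∑ i, f x i * θ i) ^ 2) (vmeas a b v) := by
    simpa [pow_two] using (memLp_top_mul Lf Lf).integrable le_top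
  have I3 : ∀ i, Integrable (fun x => θ i * (f x i * h x)) (vmeas a b v) := fun i =>
    ((memLp_top_mul (bv_memLp (hfBV i) hm) Lh).integrable le_top).const_mul _
  have E : ∀ x, (h x - ∑ i, f x i * θ i) ^ 2
      = (h x ^ 2 + (∑ i, f x i * θ i) ^ 2) - 2 * ∑ i, θ i * (f x i * h x) := by
    intro x
    have : ∑ i, θ i * (f x i * h x) = (∑ i, f x i * θ i) * h x := by
      rw [Finset.sum_mul]
      exact Finset.sum_congr rfl fun i _ => by ring
    rw [this]
    ring
  have Z : ∫ x, ∑ i, θ i * (f x i * h x) ∂(vmeas a b v) = 0 := by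
    rw [integral_finsetSum _ fun i _ => I3 i]
    refine Finset.sum_eq_zero fun i _ => ?_
    rw [integral_const_mul, vmeas_integral hab hv0 hvBV]
    have : (fun x => v x * (f x i * h x)) = fun x => f x i * (h x * v x) := by
      funext x; ring
    rw [this, horth i, mul_zero]
  have C : ∫ x, h x ^ 2 ∂(vmeas a b v) = ∫ x, h x ^ 2 * v x ∂(unif a b) := by
    rw [vmeas_integral hab hv0 hvBV]
    simp only [mul_comm]
  simp_rw [E]
  rw [integral_sub (by exact I1.add I2) ((integrable_finsetSum _ fun i _ => I3 i).const_mul 2),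
    integral_const_mul, Z, integral_add I1 I2, C]
  have : 0 ≤ ∫ x, (∑ i, f x i * θ i) ^ 2 ∂(vmeas a b v) := integral_nonneg fun x => sq_nonneg _
  linarith

/-! ### Localized alternatives -/

lemma bv_poly_indicator (a b p q : ℝ) (P : Polynomial ℝ) :
    BoundedVariationOn ((Ioo p q).indicator fun x => P.eval x) (Icc a b) := by
  have h1 : BoundedVariationOn ((Ioi p).indicator (1 : ℝ → ℝ)) (Icc a b) := by
    refine MonotoneOn.boundedVariationOn (C := 1) ?_ ?_
    · intro x _ y _ hxy
      simp only [indicator, mem_Ioi, Pi.one_apply]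
      split_ifs <;> linarith
    · intro x _
      simp only [indicator, Pi.one_apply]
      split_ifs <;> simp
  have h2 : BoundedVariationOn ((Ici q).indicator (1 : ℝ → ℝ)) (Icc a b) := by
    refine MonotoneOn.boundedVariationOn (C := 1) ?_ ?_
    · intro x _ y _ hxy
      simp only [indicator, mem_Ici, Pi.one_apply]
      split_ifs <;> linarith
    · intro x _
      simp only [indicator, Pi.one_apply]
      split_ifs <;> simp
  have h3 : BoundedVariationOn ((fun y : ℝ => 1 - y) ∘ (Ici q).indicator (1 : ℝ → ℝ))
      (Icc a b) := by
    refine LipschitzWith.comp_boundedVariationOn (C := 1) ?_ h2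
    exact LipschitzWith.of_dist_le_mul fun x y => by
      rw [NNReal.coe_one, one_mul, Real.dist_eq, Real.dist_eq, abs_sub_comm x y]
      exact le_of_eq (congrArg abs (by ring))
  have h4 : BoundedVariationOn (fun x => P.eval x) (Icc a b) := by
    have hP : ContDiff ℝ 1 fun x : ℝ => P.eval x := by
      simpa using P.contDiff_aeval (𝕜 := ℝ) 1
    obtain ⟨K, hK⟩ := hP.contDiffOn.exists_lipschitzOnWith one_ne_zero
      (convex_Icc a b) isCompact_Icc
    exact hK.comp_boundedVariationOn (mapsTo_id _) (BoundedVariationOn.id_Icc a b)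
  convert (h1.mul h3).mul h4 using 1
  funext x
  by_cases hp : p < x <;> by_cases hq : x < q <;>
    simp [indicator, hp, hq, not_le.2, not_lt.1]

/-- Finitely many linear constraints cannot annihilate the infinite-dimensional space of
polynomials, so a nonzero polynomial satisfies all of them. -/
lemma exists_poly {k : ℕ} (T : Polynomial ℝ →ₗ[ℝ] (Fin k → ℝ)) :
    ∃ P : Polynomial ℝ, P ≠ 0 ∧ T P = 0 := by
  by_contra! H
  exact Polynomial.not_finite (R := ℝ) (Module.Finite.of_injective T
    ((injective_iff_map_eq_zero T).2 fun P hP => by_contra fun h0 => H P h0 hP))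

/-- If `t·v·λ̃ ≤ ξ` fails, the failure happens on an interval free of atoms of `ξ`: functions of
bounded variation are continuous almost everywhere, so a strict inequality between densities
on a set of positive measure persists on an interval. -/
lemma exists_interval {a b : ℝ} (hab : a < b) {v : ℝ → ℝ}
    (hvBV : BoundedVariationOn v (Icc a b)) {d : ℝ → ℝ} (hdBV : BoundedVariationOn d (Icc a b))
    (s : Finset ℝ) {t : ℝ} (ht : 0 ≤ t) (A : Measure ℝ)
    (hnot : ¬ ENNReal.ofReal t • vmeas a b v ≤
      A + (volume.restrict (Icc a b)).withDensity (fun x => ENNReal.ofReal (d x))) :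
    ∃ p q, p < q ∧ Ioo p q ⊆ Icc a b ∧ ∀ x ∈ Ioo p q, x ∉ s ∧ d x < t * (b - a)⁻¹ * v x := by
  have hfreq : ∃ᵐ x ∂(volume.restrict (Icc a b)), d x < t * (b - a)⁻¹ * v x := by
    intro hev
    apply hnot
    rw [smul_vmeas hab v ht]
    refine le_trans (withDensity_mono ?_) (Measure.le_add_left le_rfl)
    filter_upwards [hev] with x hx
    exact ENNReal.ofReal_le_ofReal (not_lt.1 hx)
  have e1 := hvBV.locallyBoundedVariationOn.ae_differentiableWithinAt measurableSet_Icc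
  have e2 := hdBV.locallyBoundedVariationOn.ae_differentiableWithinAt measurableSet_Icc
  have e3 : ∀ᵐ x ∂(volume.restrict (Icc a b)), x ∉ (↑(s ∪ {a, b}) : Set ℝ) :=
    (Finset.countable_toSet _).ae_notMem _
  have e4 : ∀ᵐ x ∂(volume.restrict (Icc a b)), x ∈ Icc a b := ae_restrict_mem measurableSet_Icc
  obtain ⟨x, hx, h1, h2, h3, h4⟩ :=
    (hfreq.and_eventually (e1.and (e2.and (e3.and e4)))).exists
  simp only [Finset.coe_union, Finset.coe_insert, Finset.coe_singleton, mem_union,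
    Finset.mem_coe, mem_insert_iff, mem_singleton_iff, not_or] at h3
  have hnhds : Icc a b ∈ nhds x := Icc_mem_nhds (lt_of_le_of_ne h4.1 (Ne.symm h3.2.1))
    (lt_of_le_of_ne h4.2 h3.2.2)
  have c1 := h1.continuousWithinAt.continuousAt hnhds
  have c2 := h2.continuousWithinAt.continuousAt hnhds
  have c3 : ∀ᶠ y in nhds x, y ∉ s :=
    s.finite_toSet.isClosed.isOpen_compl.mem_nhds (by simpa using h3.1)
  have hall := (c2.eventually_lt (c1.const_mul (t * (b - a)⁻¹)) hx).and (c3.and hnhds)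
  obtain ⟨p, q, hpq, hsub⟩ := mem_nhds_iff_exists_Ioo_subset.1 hall
  exact ⟨p, q, hpq.1.trans hpq.2, fun y hy => (hsub hy).2.2,
    fun y hy => ⟨(hsub hy).2.1, (hsub hy).1⟩⟩

/-- If `t·v·λ̃ ≤ ξ` fails, some alternative of norm exactly `√c` in `L²(v·λ̃)` is supported where
`ξ` is dominated by `t·v·λ̃`, and hence has squared norm at most `t * c` in `L²(ξ)`. -/
lemma exists_alternative {a b : ℝ} (hab : a < b) {k : ℕ} {f : ℝ → Fin k → ℝ}
    (hfBV : ∀ i, BoundedVariationOn (fun x => f x i) (Icc a b))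
    {v : ℝ → ℝ} (hv0 : ∀ x, 0 ≤ v x) (hvBV : BoundedVariationOn v (Icc a b))
    [IsFiniteMeasure (vmeas a b v)] {c : ℝ} (hc : 0 < c) {ξ : Measure ℝ} (hξ : MemXi a b ξ)
    {t : ℝ} (ht : 0 < t) (hnot : ¬ ENNReal.ofReal t • vmeas a b v ≤ ξ) :
    ∃ h ∈ FClass a b k f v c, ∫ x, h x ^ 2 ∂(vmeas a b v) = c ∧ ∫ x, h x ^ 2 ∂ξ ≤ t * c := by
  have := unif_finite hab
  obtain ⟨_, s, w, d, _, hdBV, hd0, rfl⟩ := hξ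
  obtain ⟨p, q, hpq, hsub, hJ⟩ := exists_interval hab hvBV hdBV s ht.le _ hnot
  have hL : 0 < (b - a)⁻¹ := inv_pos.2 (by linarith)
  have hvpos : ∀ x ∈ Ioo p q, 0 < v x := fun x hx =>
    pos_of_mul_pos_right ((hd0 x).trans_lt (hJ x hx).2) (by positivity)
  set g : Polynomial ℝ → ℝ → ℝ := fun P => (Ioo p q).indicator fun x => P.eval x with hg
  have gBV : ∀ P, BoundedVariationOn (g P) (Icc a b) := bv_poly_indicator a b p q
  have gadd : ∀ P Q x, g (P + Q) x = g P x + g Q x := fun P Q x => by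
    simp only [hg, indicator]; split_ifs <;> simp
  have gsmul : ∀ (r : ℝ) P x, g (r • P) x = r * g P x := fun r P x => by
    simp only [hg, indicator]; split_ifs <;> simp
  have Lv := bv_memLp hvBV (unif_mem (a := a) (b := b))
  have Lg : ∀ P, MemLp (g P) ∞ (unif a b) := fun P => bv_memLp (gBV P) unif_mem
  have Ig : ∀ i P, Integrable (fun x => f x i * (g P x * v x)) (unif a b) := fun i P =>
    (memLp_top_mul (bv_memLp (hfBV i) unif_mem) (memLp_top_mul (Lg P) Lv)).integrable le_top
  let T : Polynomial ℝ →ₗ[ℝ] (Fin k → ℝ) :=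
    { toFun := fun P i => ∫ x, f x i * (g P x * v x) ∂(unif a b)
      map_add' := fun P Q => by
        funext i
        rw [Pi.add_apply, ← integral_add (Ig i P) (Ig i Q)]
        congr 1
        funext x
        rw [gadd]; ring
      map_smul' := fun r P => by
        funext i
        rw [Pi.smul_apply, RingHom.id_apply, smul_eq_mul, ← integral_const_mul]
        congr 1
        funext x
        rw [gsmul]; ring }
  obtain ⟨P, hP0, hTP⟩ := exists_poly T
  set I := ∫ x, g P x ^ 2 * v x ∂(unif a b) with hI
  -- A nonzero polynomial has finitely many roots, so its square has positive integral on `(p, q)`.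
  have hIpos : 0 < I := by
    have hint : Integrable (fun x => g P x ^ 2 * v x) (unif a b) := by
      simpa [pow_two] using (memLp_top_mul (memLp_top_mul (Lg P) (Lg P)) Lv).integrable le_top
    rw [hI, integral_pos_iff_support_of_nonneg (fun x => mul_nonneg (sq_nonneg _) (hv0 x)) hint]
    have hss : Ioo p q \ ↑P.roots.toFinset ⊆ Function.support fun x => g P x ^ 2 * v x := by
      rintro x ⟨hx, hr⟩
      have h1 : P.eval x ≠ 0 := by simpa [hP0] using hr
      have h2 := hvpos x hx
      simp only [Function.mem_support, hg, indicator_of_mem hx]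
      positivity
    refine lt_of_lt_of_le ?_ (measure_mono hss)
    rw [unif_eq hab, Measure.smul_apply, smul_eq_mul]
    refine ENNReal.mul_pos (ENNReal.ofReal_pos.2 hL).ne' ?_
    rw [measure_sdiff_null ((Finset.finite_toSet _).measure_zero _),
      Measure.restrict_apply measurableSet_Ioo, inter_eq_left.2 hsub, Real.volume_Ioo]
    exact (ENNReal.ofReal_pos.2 (by linarith)).ne'
  set h := g (√(c / I) • P) with hh
  have hx : ∀ x, h x = √(c / I) * g P x := gsmul _ P
  have hc2 : ∫ x, h x ^ 2 * v x ∂(unif a b) = c := by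
    have : ∀ x, h x ^ 2 * v x = (c / I) * (g P x ^ 2 * v x) := fun x => by
      rw [hx, mul_pow, Real.sq_sqrt (by positivity)]; ring
    simp_rw [this]
    rw [integral_const_mul, ← hI]
    field_simp
  have hcv : ∫ x, h x ^ 2 ∂(vmeas a b v) = c := by
    rw [vmeas_integral hab hv0 hvBV, ← hc2]
    simp only [mul_comm]
  refine ⟨h, ⟨gBV _, hc2.ge, fun i => ?_⟩, hcv, ?_⟩
  · have h1 : T (√(c / I) • P) = 0 := by rw [map_smul, hTP, smul_zero]
    exact congrFun h1 i
  · set m := volume.restrict (Icc a b)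
    have hle : ((∑ t ∈ s, w t • Measure.dirac t)
        + m.withDensity (fun x => ENNReal.ofReal (d x))).restrict (Ioo p q)
        ≤ ENNReal.ofReal t • vmeas a b v := by
      have hz : (∑ t ∈ s, w t • Measure.dirac t : Measure ℝ).restrict (Ioo p q) = 0 := by
        rw [Measure.restrict_eq_zero, Measure.finsetSum_apply]
        refine Finset.sum_eq_zero fun y hy => ?_
        have : y ∉ Ioo p q := fun hy' => (hJ y hy').1 hy
        simp [Measure.dirac_apply' _ measurableSet_Ioo, this]
      rw [Measure.restrict_add, hz, zero_add, smul_vmeas hab v ht.le]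
      refine le_trans ?_ (Measure.restrict_le_self (s := Ioo p q))
      rw [restrict_withDensity measurableSet_Ioo, restrict_withDensity measurableSet_Ioo]
      refine withDensity_mono ?_
      filter_upwards [ae_restrict_mem measurableSet_Ioo] with x hx
      exact ENNReal.ofReal_le_ofReal (hJ x hx).2.le
    rw [← setIntegral_eq_integral_of_forall_compl_eq_zero (s := Ioo p q)
      fun x hx => by simp [hh, hg, indicator_of_notMem hx]]
    have Lh := bv_memLp (gBV (√(c / I) • P)) (vmeas_mem (a := a) (b := b) v)
    have Ih : Integrable (fun x => h x ^ 2) (vmeas a b v) := by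
      simpa [pow_two] using (memLp_top_mul Lh Lh).integrable le_top
    refine (integral_mono_measure hle (Filter.Eventually.of_forall fun x => sq_nonneg _)
      (Ih.smul_measure ENNReal.ofReal_ne_top)).trans ?_
    rw [integral_smul_measure, hcv, ENNReal.toReal_ofReal ht.le, smul_eq_mul]

/-! ### The efficiency -/

/-- **Corollary 2.3**: for `ξ ∈ Ξ`, the relative LOF-efficiency of `ξ` equals
`r = sup{t : t·(v·λ̃) ≤ ξ}`, and `r ∈ [0,1]`. -/
theorem lof_efficiency_eq_sup
    (a b : ℝ) (hab : a < b) (k : ℕ)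
    (f : ℝ → Fin k → ℝ)
    (hfcont : ∀ i, ContinuousOn (fun x => f x i) (Icc a b))
    (hfBV : ∀ i, BoundedVariationOn (fun x => f x i) (Icc a b))
    (v : ℝ → ℝ) (hv0 : ∀ x, 0 ≤ v x) (hvBV : BoundedVariationOn v (Icc a b))
    (hv1 : ∫ x, v x ∂(unif a b) = 1)
    (σ2 : ℝ) (hσ : 0 < σ2) (c : ℝ) (hc : 0 < c)
    (ξ : Measure ℝ) (hξ : MemXi a b ξ)
    (r : ℝ)
    (hr : r = sSup {t : ℝ |
      ENNReal.ofReal t • ((unif a b).withDensity fun x => ENNReal.ofReal (v x)) ≤ ξ}) :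
    r ∈ Icc (0 : ℝ) 1 ∧
    sInf ((fun h => Bfun k f σ2 h ξ) '' FClass a b k f v c)
      / sInf ((fun h => Bfun k f σ2 h ((unif a b).withDensity fun x => ENNReal.ofReal (v x)))
          '' FClass a b k f v c)
      = r := by
  change r = sSup {t : ℝ | ENNReal.ofReal t • vmeas a b v ≤ ξ} at hr
  change r ∈ Icc (0 : ℝ) 1 ∧ _ / sInf ((fun h => Bfun k f σ2 h (vmeas a b v)) '' _) = r
  have hvu := vmeas_univ hab hv0 hvBV hv1
  have : IsFiniteMeasure (vmeas a b v) := ⟨by simp [hvu]⟩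
  have hξp : IsProbabilityMeasure ξ := hξ.1
  have hξmem : ∀ᵐ x ∂ξ, x ∈ Icc a b := by
    obtain ⟨_, s, w, d, hs, _, _, hξe⟩ := hξ
    rw [hξe, ae_add_measure_iff]
    refine ⟨?_, (withDensity_absolutelyContinuous _ _).ae_le (ae_restrict_mem measurableSet_Icc)⟩
    rw [ae_iff, Measure.finsetSum_apply]
    refine Finset.sum_eq_zero fun y hy => ?_
    have hy' := hs hy
    have : MeasurableSet {x | ¬ x ∈ Icc a b} := measurableSet_Icc.compl
    rw [Measure.smul_apply, Measure.dirac_apply' _ this]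
    simp [hy'.1, hy'.2]
  set S := {t : ℝ | ENNReal.ofReal t • vmeas a b v ≤ ξ} with hS
  have h0S : (0 : ℝ) ∈ S := by simp [hS, Measure.zero_le]
  have hS1 : ∀ t ∈ S, t ≤ 1 := by
    intro t ht
    have h1 := ht univ
    simpa [hvu] using h1
  have hbdd : BddAbove S := ⟨1, hS1⟩
  have hr0 : 0 ≤ r := hr ▸ le_csSup hbdd h0S
  have hr1 : r ≤ 1 := hr ▸ csSup_le ⟨0, h0S⟩ hS1
  have hnotS : ∀ t, r < t → ¬ ENNReal.ofReal t • vmeas a b v ≤ ξ := fun t ht hmem =>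
    (hr ▸ ht).not_ge (le_csSup hbdd hmem)
  have hex := fun t (ht : r < t) =>
    exists_alternative (f := f) hab hfBV hv0 hvBV hc hξ (hr0.trans_lt ht) (hnotS t ht)
  have lower_v : ∀ h ∈ FClass a b k f v c, c / σ2 ≤ Bfun k f σ2 h (vmeas a b v) := by
    intro h hh
    rw [Bfun, div_eq_mul_one_div, mul_comm]
    gcongr
    exact le_ciInf fun θ => FClass_le_vmeas hab hfBV hv0 hvBV hh θ
  have lower_ξ : ∀ h ∈ FClass a b k f v c, r * (c / σ2) ≤ Bfun k f σ2 h ξ := by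
    intro h hh
    have key : r * c ≤ ⨅ θ : Fin k → ℝ, ∫ x, (h x - ∑ i, f x i * θ i) ^ 2 ∂ξ := by
      refine le_ciInf fun θ => ?_
      have hnn : 0 ≤ ∫ x, (h x - ∑ i, f x i * θ i) ^ 2 ∂ξ := integral_nonneg fun x => sq_nonneg _
      rw [← le_div_iff₀ hc, hr]
      refine csSup_le ⟨0, h0S⟩ fun t ht => ?_
      rcases le_or_gt t 0 with ht0 | ht0
      · exact ht0.trans (by positivity)
      rw [le_div_iff₀ hc]
      have L := (bv_memLp hh.1 hξmem).sub (residual_memLp hfBV hξmem θ)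
      have hint : Integrable (fun x => (h x - ∑ i, f x i * θ i) ^ 2) ξ := by
        simpa [pow_two] using (memLp_top_mul L L).integrable le_top
      have hmono := integral_mono_measure ht
        (Filter.Eventually.of_forall fun x => sq_nonneg (h x - ∑ i, f x i * θ i)) hint
      rw [integral_smul_measure, ENNReal.toReal_ofReal ht0.le, smul_eq_mul] at hmono
      exact (mul_le_mul_of_nonneg_left (FClass_le_vmeas hab hfBV hv0 hvBV hh θ) ht0.le).trans hmono
    calc r * (c / σ2) = (1 / σ2) * (r * c) := by ring
      _ ≤ Bfun k f σ2 h ξ := by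
        unfold Bfun
        gcongr
  obtain ⟨h₀, hh₀, hn₀, -⟩ := hex (r + 1) (by linarith)
  have hden : sInf ((fun h => Bfun k f σ2 h (vmeas a b v)) '' FClass a b k f v c) = c / σ2 := by
    apply le_antisymm
    · refine (csInf_le ⟨c / σ2, forall_mem_image.2 lower_v⟩ (mem_image_of_mem _ hh₀)).trans ?_
      refine (Bfun_le f hσ h₀ _).trans (le_of_eq ?_)
      rw [hn₀]
      ring
    · exact le_csInf ⟨_, mem_image_of_mem _ hh₀⟩ (forall_mem_image.2 lower_v)
  have hnum : sInf ((fun h => Bfun k f σ2 h ξ) '' FClass a b k f v c) = r * (c / σ2) := by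
    apply le_antisymm
    · have hcσ : 0 < c / σ2 := by positivity
      rw [← div_le_iff₀ hcσ]
      refine le_of_forall_gt_imp_ge_of_dense fun t ht => ?_
      obtain ⟨h, hh, -, hn⟩ := hex t ht
      rw [div_le_iff₀ hcσ]
      refine (csInf_le ⟨_, forall_mem_image.2 lower_ξ⟩ (mem_image_of_mem _ hh)).trans ?_
      calc Bfun k f σ2 h ξ ≤ (1 / σ2) * ∫ x, h x ^ 2 ∂ξ := Bfun_le f hσ h ξ
        _ ≤ (1 / σ2) * (t * c) := by gcongr
        _ = t * (c / σ2) := by ring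
    · exact le_csInf ⟨_, mem_image_of_mem _ hh₀⟩ (forall_mem_image.2 lower_ξ)
  refine ⟨⟨hr0, hr1⟩, ?_⟩
  rw [hden, hnum, mul_div_assoc, div_self (by positivity), mul_one]
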